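/- Let K be a compact Hausdorff abelian topological group, d a natural number, and N a closed subgroup of K such that K/N is topologically isomorphic to the torus 𝕋^d (where 𝕋 = ℝ/ℤ). Let G be a dense subgroup of K. Then G (with the subspace topology) is locally minimal if and only if G ∩ N is locally essential in N. -/

import Mathlib

/-- A Hausdorff topological abelian group `(G, τ)` is *locally minimal* if there exists a
neighborhood `V` of `0` such that the only Hausdorff group topology `σ` coarser than `τ`
for which `V` is still a `σ`-neighborhood of `0` is `τ` itself. -/
def LocallyMinimal (G : Type*) [AddGroup G] [τ : TopologicalSpace G] : Prop :=
  ∃ V ∈ nhds (0 : G), ∀ σ : TopologicalSpace G, τ ≤ σ →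
    @IsTopologicalAddGroup G σ _ → @T2Space G σ → V ∈ @nhds G σ 0 → σ = τ

/-- A subgroup `H` of a topological abelian group `G` is *locally essential* if there is a
neighborhood `V` of `0` such that every closed subgroup `N ⊆ V` with `H ⊓ N = ⊥` is
trivial. -/
def LocallyEssential {G : Type*} [AddCommGroup G] [TopologicalSpace G]
    (H : AddSubgroup G) : Prop :=
  ∃ V ∈ nhds (0 : G), ∀ N : AddSubgroup G, IsClosed (N : Set G) →
    (N : Set G) ⊆ V → H ⊓ N = ⊥ → N = ⊥

/-!
A dense subgroup `G` of a compact group `K` is locally minimal if and only if it is locally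
essential in `K`. If a small closed subgroup `M` meets `G` trivially, then `G → K ⧸ M` induces a
coarser Hausdorff group topology on `G`; when it is the original one, density of `G` forces
`M = 0`. Conversely, for a coarser Hausdorff group topology `σ` on `G`, the cluster points in `K` of
the filter of `σ`-neighbourhoods of `0` form a small closed subgroup meeting `G` trivially. If it
is trivial, compactness makes the inclusion `(G, σ) → K` continuous, so `σ` is the original
topology.

As a torus has no small subgroups, all small subgroups of `K` lie in `N`, so local essentiality of
`G` in `K` and of `G ∩ N` in `N` are tested on the same subgroups.
-/

open Filter Function Topology

/-- A topological group *has no small subgroups* if some neighbourhood of `0` contains no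
nontrivial subgroup. -/
def NoSmallSubgroups (A : Type*) [AddGroup A] [TopologicalSpace A] : Prop :=
  ∃ U ∈ 𝓝 (0 : A), ∀ H : AddSubgroup A, (H : Set A) ⊆ U → H = ⊥

namespace NoSmallSubgroups

theorem of_injective {A B : Type*} [AddGroup A] [TopologicalSpace A] [AddGroup B]
    [TopologicalSpace B] (hB : NoSmallSubgroups B) (f : A →+ B) (hf : Continuous f)
    (hinj : Injective f) : NoSmallSubgroups A := by
  obtain ⟨U, hU, hUB⟩ := hB
  refine ⟨f ⁻¹' U, hf.tendsto' 0 0 (map_zero f) hU, fun H hH ↦ ?_⟩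
  have hmap : H.map f = ⊥ := hUB _ (Set.image_subset_iff.2 hH)
  exact (AddSubgroup.map_eq_bot_iff_of_injective H hinj).1 hmap

theorem pi {ι : Type*} [Finite ι] {A : ι → Type*} [∀ i, AddGroup (A i)]
    [∀ i, TopologicalSpace (A i)] (hA : ∀ i, NoSmallSubgroups (A i)) :
    NoSmallSubgroups (∀ i, A i) := by
  choose U hU hUA using hA
  refine ⟨Set.univ.pi U, set_pi_mem_nhds Set.finite_univ fun i _ ↦ hU i, fun H hH ↦ ?_⟩
  have hmap (i : ι) : H.map (Pi.evalAddMonoidHom A i) = ⊥ :=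
    hUA i _ (Set.image_subset_iff.2 fun x hx ↦ hH hx i (Set.mem_univ i))
  refine (AddSubgroup.eq_bot_iff_forall H).2 fun x hx ↦ funext fun i ↦ ?_
  exact (AddSubgroup.map_eq_bot_iff H).1 (hmap i) hx

theorem of_norm_two_nsmul {A : Type*} [NormedAddGroup A] {ε : ℝ} (hε : 0 < ε)
    (hdouble : ∀ x : A, ‖x‖ < ε → ‖2 • x‖ = 2 * ‖x‖) : NoSmallSubgroups A := by
  refine ⟨Metric.ball 0 ε, Metric.ball_mem_nhds 0 hε, fun H hH ↦ ?_⟩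
  refine (AddSubgroup.eq_bot_iff_forall H).2 fun x hx ↦ ?_
  have hsmall (n : ℕ) : ‖n • x‖ < ε := mem_ball_zero_iff.1 (hH (H.nsmul_mem hx n))
  have hpow (k : ℕ) : ‖2 ^ k • x‖ = 2 ^ k * ‖x‖ := by
    induction k with
    | zero => simp
    | succ k ih => rw [pow_succ, mul_nsmul, hdouble _ (hsmall _), ih]; ring
  by_contra hne
  obtain ⟨k, hk⟩ := pow_unbounded_of_one_lt (ε / ‖x‖) (one_lt_two : (1 : ℝ) < 2)
  have hlarge : ε < ‖2 ^ k • x‖ := hpow k ▸ (div_lt_iff₀ (norm_pos_iff.2 hne)).1 hk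
  exact hlarge.not_gt (hsmall _)

theorem t1Space {A : Type*} [AddGroup A] [TopologicalSpace A] [IsTopologicalAddGroup A]
    (hA : NoSmallSubgroups A) : T1Space A := by
  obtain ⟨U, hU, hUA⟩ := hA
  have hclosure : (⊥ : AddSubgroup A).topologicalClosure = ⊥ := by
    refine hUA _ fun x hx ↦ ?_
    have hspec : 0 ⤳ x := specializes_iff_mem_closure.2 hx
    exact mem_of_mem_nhds (hspec.symm hU)
  refine IsTopologicalAddGroup.t1Space A ?_
  rw [← AddSubgroup.coe_bot, ← hclosure]
  exact AddSubgroup.isClosed_topologicalClosure _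

end NoSmallSubgroups

theorem exists_coe_addCircle_eq_abs_eq_norm {p : ℝ} (x : AddCircle p) :
    ∃ r : ℝ, (r : AddCircle p) = x ∧ |r| = ‖x‖ := by
  obtain ⟨s, rfl⟩ := QuotientAddGroup.mk_surjective x
  refine ⟨s - round (p⁻¹ * s) * p, ?_, (AddCircle.norm_eq p).symm⟩
  rw [← zsmul_eq_mul, AddCircle.coe_sub, AddCircle.coe_zsmul, AddCircle.coe_period, zsmul_zero,
    sub_zero]

theorem addCircle_norm_two_nsmul {p : ℝ} (x : AddCircle p) (hx : ‖x‖ < |p| / 4) :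
    ‖2 • x‖ = 2 * ‖x‖ := by
  obtain ⟨r, rfl, hr⟩ := exists_coe_addCircle_eq_abs_eq_norm x
  have hp : p ≠ 0 := by
    rintro rfl
    simpa using (norm_nonneg _).trans_lt hx
  have habs : |2 * r| = 2 * |r| := by rw [abs_mul, abs_two]
  rw [← hr, ← habs, ← AddCircle.coe_nsmul, nsmul_eq_mul, Nat.cast_ofNat,
    AddCircle.norm_coe_eq_abs_iff p hp]
  linarith

theorem noSmallSubgroups_addCircle {p : ℝ} (hp : p ≠ 0) : NoSmallSubgroups (AddCircle p) :=
  .of_norm_two_nsmul (by positivity) addCircle_norm_two_nsmul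

section ClusterSubgroup

variable {H K : Type*} [AddGroup H] [TopologicalSpace H] [IsTopologicalAddGroup H]
  [AddGroup K] [TopologicalSpace K] [IsTopologicalAddGroup K]

theorem mapClusterPt_sub {f : H →+ K} {x y : K} (hx : MapClusterPt x (𝓝 0) f)
    (hy : MapClusterPt y (𝓝 0) f) : MapClusterPt (x - y) (𝓝 0) f := by
  have hxy : MapClusterPt (x - y) (𝓝 (0 : H) ×ˢ 𝓝 0) fun a ↦ f (a.1 - a.2) := by
    simpa only [comp_def, Prod.map, map_sub] using
      (hx.prodMap hy).continuousAt_comp (f := fun a : K × K ↦ a.1 - a.2)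
        continuous_sub.continuousAt
  refine MapClusterPt.of_comp (φ := fun a : H × H ↦ a.1 - a.2) ?_ hxy
  rw [← nhds_prod_eq]
  exact continuous_sub.tendsto' _ _ (sub_zero 0)

/-- The cluster points at `0` of a homomorphism of topological groups. For a compact target this
subgroup is the obstruction to continuity. -/
def clusterSubgroup (f : H →+ K) : AddSubgroup K :=
  AddSubgroup.ofSub {x | MapClusterPt x (𝓝 0) f}
    ⟨0, ((map_zero f ▸ tendsto_pure_nhds f 0).mapClusterPt).mono (pure_le_nhds 0)⟩
    fun x hx y hy ↦ sub_eq_add_neg x y ▸ mapClusterPt_sub hx hy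

theorem mem_clusterSubgroup {f : H →+ K} {x : K} :
    x ∈ clusterSubgroup f ↔ MapClusterPt x (𝓝 0) f :=
  Iff.rfl

theorem isClosed_clusterSubgroup (f : H →+ K) : IsClosed (clusterSubgroup f : Set K) :=
  isClosed_setOfPred_clusterPt

theorem clusterSubgroup_subset {f : H →+ K} {C : Set K} (hC : IsClosed C)
    (hfC : f ⁻¹' C ∈ 𝓝 0) : (clusterSubgroup f : Set K) ⊆ C :=
  fun _ hx ↦ hC.mem_of_mapClusterPt hx hfC

theorem range_inf_clusterSubgroup [T2Space H] {f : H →+ K}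
    (hf : ∀ a, comap f (𝓝 (f a)) ≤ 𝓝 a) : f.range ⊓ clusterSubgroup f = ⊥ := by
  refine (AddSubgroup.eq_bot_iff_forall _).2 ?_
  rintro _ ⟨⟨a, rfl⟩, ha⟩
  have hmap : NeBot (𝓝 (f a) ⊓ map f (𝓝 0)) := mem_clusterSubgroup.1 ha
  have hcomap : NeBot (comap f (𝓝 (f a)) ⊓ 𝓝 0) := by
    rwa [inf_comm, neBot_inf_comap_iff_map, inf_comm]
  have hnhds : NeBot (𝓝 a ⊓ 𝓝 0) := hcomap.mono (inf_le_inf_right _ (hf a))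
  rw [eq_of_nhds_neBot hnhds, map_zero]

theorem continuous_of_clusterSubgroup_eq_bot [CompactSpace K] {f : H →+ K}
    (hf : clusterSubgroup f = ⊥) : Continuous f := by
  refine continuous_of_continuousAt_zero f ?_
  rw [ContinuousAt, map_zero]
  exact tendsto_nhds_of_unique_mapClusterPt fun x hx ↦
    (AddSubgroup.eq_bot_iff_forall _).1 hf x (mem_clusterSubgroup.2 hx)

end ClusterSubgroup

theorem eq_of_isInducing_domRestrict_of_dense {X Y : Type*} [TopologicalSpace X] [T2Space X]
    [TopologicalSpace Y] {s : Set X} (hs : Dense s) {f : X → Y} (hf : Continuous f)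
    (hfs : IsInducing (s.domRestrict f)) {x a : X} (ha : a ∈ s) (hxa : f x = f a) : x = a := by
  have : NeBot (comap ((↑) : s → X) (𝓝 x)) := hs.isDenseInducing_val.comap_nhds_neBot x
  have hcoe : Tendsto ((↑) : s → X) (comap (↑) (𝓝 x)) (𝓝 x) := tendsto_comap
  have hlim : Tendsto id (comap ((↑) : s → X) (𝓝 x)) (𝓝 ⟨a, ha⟩) :=
    hfs.tendsto_nhds_iff.2 ((hf.tendsto' x (f a) hxa).comp hcoe)
  exact tendsto_nhds_unique hcoe ((continuous_subtype_val.tendsto _).comp hlim)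

section Dense

variable {K : Type*} [AddCommGroup K] [TopologicalSpace K] [IsTopologicalAddGroup K]
  {G : AddSubgroup K}

theorem LocallyMinimal.locallyEssential [T2Space K] (hG : Dense (G : Set K))
    (hmin : LocallyMinimal G) : LocallyEssential G := by
  obtain ⟨V, hV, hmin⟩ := hmin
  obtain ⟨V', hV', hVV'⟩ := (mem_nhds_induced _ _ _).1 hV
  obtain ⟨W, hW, hWV'⟩ := exists_nhds_zero_half hV'
  refine ⟨W, hW, fun M hM hMW hGM ↦ ?_⟩
  let q : G →+ K ⧸ M := (QuotientAddGroup.mk' M).comp G.subtype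
  have hq : Continuous q := continuous_quotient_mk'.comp continuous_subtype_val
  have hinj : Injective q := by
    rw [← AddMonoidHom.ker_eq_bot_iff, ← AddMonoidHom.comap_ker, QuotientAddGroup.ker_mk']
    exact AddSubgroup.addSubgroupOf_eq_bot.2 (disjoint_iff.2 hGM).symm
  have hind : IsInducing q := by
    refine ⟨(hmin (.induced q inferInstance) hq.le_induced (topologicalAddGroup_induced q)
      (@T2Space.of_injective_continuous _ _ (_) _ _ _ hinj continuous_induced_dom) ?_).symm⟩
    rw [mem_nhds_induced, map_zero]
    refine ⟨(↑) '' W, QuotientAddGroup.isOpenMap_coe.image_mem_nhds hW, ?_⟩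
    rintro g ⟨w, hw, hwg⟩
    have hdiff : -w + g ∈ M := QuotientAddGroup.eq.1 hwg
    exact hVV' (by simpa using hWV' w hw _ (hMW hdiff))
  refine (AddSubgroup.eq_bot_iff_forall M).2 fun m hm ↦ ?_
  exact eq_of_isInducing_domRestrict_of_dense hG continuous_quotient_mk' hind G.zero_mem
    ((QuotientAddGroup.eq_zero_iff m).2 hm)

theorem LocallyEssential.locallyMinimal [CompactSpace K] (hess : LocallyEssential G) :
    LocallyMinimal G := by
  obtain ⟨V, hV, hess⟩ := hess
  obtain ⟨C, hC, hCclosed, hCV⟩ := exists_mem_nhds_isClosed_subset hV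
  refine ⟨((↑) : G → K) ⁻¹' C, continuous_subtype_val.tendsto (0 : G) hC, fun σ hle _ _ hCσ ↦ ?_⟩
  have hfiner (a : G) : comap G.subtype (𝓝 (G.subtype a)) ≤ @nhds G σ a :=
    (nhds_induced _ a).ge.trans (nhds_mono hle)
  have hbot : clusterSubgroup G.subtype = ⊥ :=
    hess _ (isClosed_clusterSubgroup _) ((clusterSubgroup_subset hCclosed hCσ).trans hCV)
      (by simpa only [AddSubgroup.range_subtype] using range_inf_clusterSubgroup hfiner)
  exact le_antisymm (continuous_of_clusterSubgroup_eq_bot hbot).le_induced hle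

theorem locallyMinimal_iff_locallyEssential_of_dense [T2Space K] [CompactSpace K]
    (hG : Dense (G : Set K)) : LocallyMinimal G ↔ LocallyEssential G :=
  ⟨LocallyMinimal.locallyEssential hG, LocallyEssential.locallyMinimal⟩

end Dense

section Restriction

variable {K : Type*} [AddCommGroup K] [TopologicalSpace K] {G N : AddSubgroup K}

theorem LocallyEssential.addSubgroupOf (hG : LocallyEssential G) (hN : IsClosed (N : Set K)) :
    LocallyEssential (G.addSubgroupOf N) := by
  obtain ⟨V, hV, hess⟩ := hG
  refine ⟨((↑) : N → K) ⁻¹' V, continuous_subtype_val.tendsto (0 : N) hV,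
    fun M hM hMV hGM ↦ ?_⟩
  have hinf : G ⊓ M.map N.subtype = ⊥ := by
    refine (AddSubgroup.eq_bot_iff_forall _).2 ?_
    rintro _ ⟨hmG, m, hm, rfl⟩
    have hm0 : m = 0 := (AddSubgroup.eq_bot_iff_forall _).1 hGM m ⟨hmG, hm⟩
    rw [hm0, map_zero]
  have hmap : M.map N.subtype = ⊥ :=
    hess _ (hN.isClosedMap_subtype_val _ hM) (Set.image_subset_iff.2 hMV) hinf
  exact (AddSubgroup.map_eq_bot_iff_of_injective M N.subtype_injective).1 hmap

theorem NoSmallSubgroups.locallyEssential_of_addSubgroupOf (hN : NoSmallSubgroups (K ⧸ N))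
    (hG : LocallyEssential (G.addSubgroupOf N)) : LocallyEssential G := by
  obtain ⟨U, hU, hUN⟩ := hN
  obtain ⟨V, hV, hess⟩ := hG
  obtain ⟨V', hV', hVV'⟩ := (mem_nhds_induced _ _ _).1 hV
  refine ⟨V' ∩ ((↑) : K → K ⧸ N) ⁻¹' U,
    inter_mem hV' (continuous_quotient_mk'.tendsto (0 : K) hU),
    fun M hM hMV hGM ↦ ?_⟩
  have hMN : M ≤ N := by
    have hmap : M.map (QuotientAddGroup.mk' N) = ⊥ :=
      hUN _ (Set.image_subset_iff.2 fun m hm ↦ (hMV hm).2)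
    simpa only [AddSubgroup.map_eq_bot_iff, QuotientAddGroup.ker_mk'] using hmap
  have hinf : G.addSubgroupOf N ⊓ M.addSubgroupOf N = ⊥ := by
    rw [AddSubgroup.addSubgroupOf, AddSubgroup.addSubgroupOf, ← AddSubgroup.comap_inf, hGM]
    exact AddSubgroup.bot_addSubgroupOf N
  have hbot : M.addSubgroupOf N = ⊥ :=
    hess _ (hM.preimage continuous_subtype_val) (fun m hm ↦ hVV' (hMV hm).1) hinf
  exact (AddSubgroup.addSubgroupOf_eq_bot.1 hbot).eq_bot_of_le hMN

theorem NoSmallSubgroups.locallyEssential_addSubgroupOf_iff [IsTopologicalAddGroup K]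
    (hN : NoSmallSubgroups (K ⧸ N)) :
    LocallyEssential (G.addSubgroupOf N) ↔ LocallyEssential G :=
  ⟨hN.locallyEssential_of_addSubgroupOf,
    fun hG ↦ hG.addSubgroupOf (QuotientAddGroup.t1Space_iff.1 hN.t1Space)⟩

end Restriction

theorem denseSubgroup_locallyMinimal_iff_inter_locallyEssential_general {K : Type*}
    [AddCommGroup K] [TopologicalSpace K] [IsTopologicalAddGroup K] [T2Space K] [CompactSpace K]
    {N : AddSubgroup K} (hN : NoSmallSubgroups (K ⧸ N)) {G : AddSubgroup K}
    (hG : Dense (G : Set K)) : LocallyMinimal G ↔ LocallyEssential (G.addSubgroupOf N) :=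
  (locallyMinimal_iff_locallyEssential_of_dense hG).trans
    hN.locallyEssential_addSubgroupOf_iff.symm

/-- Let `K` be a compact Hausdorff abelian group, `N` a closed subgroup with `K/N`
topologically isomorphic to the torus `𝕋^d`, and `G` a dense subgroup of `K`. Then `G` is
locally minimal iff `G ∩ N` is locally essential in `N`. -/
theorem denseSubgroup_locallyMinimal_iff_inter_locallyEssential {K : Type*} [AddCommGroup K]
    [TopologicalSpace K] [IsTopologicalAddGroup K] [T2Space K] [CompactSpace K]
    (d : ℕ) (N : AddSubgroup K) (hN : IsClosed (N : Set K))
    (e : (K ⧸ N) ≃+ (Fin d → UnitAddCircle)) (he : Continuous e) (he' : Continuous e.symm)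
    (G : AddSubgroup K) (hG : Dense (G : Set K)) :
    LocallyMinimal ↥G ↔ LocallyEssential (G.addSubgroupOf N) := by
  have htorus : NoSmallSubgroups (Fin d → UnitAddCircle) :=
    .pi fun _ ↦ noSmallSubgroups_addCircle one_ne_zero
  exact denseSubgroup_locallyMinimal_iff_inter_locallyEssential_general
    (htorus.of_injective (e : K ⧸ N →+ Fin d → UnitAddCircle) he e.injective) hG
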